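/- Consider p coupled harmonic oscillators ẋ_i = y_i, ẏ_i = −x_i + Σ_{j=1}^p γ_ij(y_j − y_i), i = 1,…,p, whose stacked state z(t) ∈ ℝ^{2p} evolves as z(t) = exp(t(I_p ⊗ A₀ + Γ ⊗ E)) z(0) where A₀ = [[0,1],[−1,0]] and E = [[0,0],[0,1]]. If Γ = [γ_ij] ∈ ℝ^{p×p} is a connected interconnection and r ∈ ℝ^p satisfies rᵀΓ = 0 and rᵀ1 = 1, then |z(t) − (1rᵀ ⊗ exp(tA₀)) z(0)| → 0 as t → ∞; in particular the oscillators synchronize. -/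

import Mathlib

open Matrix Filter Topology
open scoped Kronecker

/-- `Γ` is an interconnection: off-diagonal entries are nonnegative and each diagonal
entry is minus the sum of the other entries in its row (equivalently, rows sum to zero). -/
def IsInterconnection {p : ℕ} (Γ : Matrix (Fin p) (Fin p) ℝ) : Prop :=
  (∀ i j, i ≠ j → 0 ≤ Γ i j) ∧ ∀ i, ∑ j, Γ i j = 0

/-- `Γ` is a connected interconnection: it is an interconnection and its graph
(with an edge `(i, j)` whenever `Γ i j > 0`) has a node reachable by a directed
path from every other node. -/
def IsConnectedInterconnection {p : ℕ} (Γ : Matrix (Fin p) (Fin p) ℝ) : Prop :=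
  IsInterconnection Γ ∧
    ∃ k : Fin p, ∀ i : Fin p, Relation.ReflTransGen (fun a b => 0 < Γ a b) i k

/-!
Write `J = 1rᵀ`, an idempotent with `Γ J = J Γ = 0`. On the range of `J ⊗ 1` the coupled system is
`1 ⊗ A₀`, and on its kernel `Γ` may be replaced by the deflated matrix `Γ - J`, so the difference
of the two flows is `((1 - J) ⊗ 1) exp (t (1 ⊗ A₀ + (Γ - J) ⊗ E))`. The eigenvalues of this
generator are eigenvalues of `A₀ + ν E` with `ν` an eigenvalue of `Γ - J`. By Gershgorin and the
maximum principle on the connected graph, `0` is the only eigenvalue of `Γ` outside the open left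
half-plane and its eigenvectors are constant; deflation moves it to `-1`, so `Re ν < 0`. Finally an
eigenvalue `μ` of `A₀ + ν E` satisfies `μ + μ⁻¹ = ν`, and `Re μ` and `Re μ⁻¹` have the same sign.
-/

section Eigenvectors

variable {K : Type*} [Field K]

lemma exists_common_eigenvector_of_commute [IsAlgClosed K] {V : Type*} [AddCommGroup V]
    [Module K V] [FiniteDimensional K V] {f g : Module.End K V} (hfg : Commute f g) {μ : K}
    (hμ : f.HasEigenvalue μ) : ∃ ν v, f.HasEigenvector μ v ∧ g.HasEigenvector ν v := by
  have maps_to : ∀ v ∈ f.eigenspace μ, g v ∈ f.eigenspace μ :=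
    Module.End.mapsTo_genEigenspace_of_comm hfg μ 1
  have : Nontrivial (f.eigenspace μ) := Submodule.nontrivial_iff_ne_bot.mpr hμ
  obtain ⟨ν, hν⟩ := Module.End.exists_eigenvalue (g.restrict maps_to)
  obtain ⟨⟨v, hv⟩, hgv, hv0⟩ := hν.exists_hasEigenvector
  have hv0' : v ≠ 0 := fun h => hv0 (Subtype.ext h)
  exact ⟨ν, v, ⟨hv, hv0'⟩,
    Module.End.mem_eigenspace_iff.mpr
      (congrArg Subtype.val (Module.End.mem_eigenspace_iff.mp hgv)), hv0'⟩

variable {n : Type*} [Fintype n] [DecidableEq n]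

lemma mem_spectrum_iff_exists_mulVec_eq_smul {A : Matrix n n K} {μ : K} :
    μ ∈ spectrum K A ↔ ∃ v ≠ 0, A *ᵥ v = μ • v := by
  rw [← spectrum_toLin', ← Module.End.hasEigenvalue_iff_mem_spectrum]
  constructor
  · intro hμ
    obtain ⟨v, hv⟩ := hμ.exists_hasEigenvector
    exact ⟨v, hv.2, hv.apply_eq_smul⟩
  · rintro ⟨v, hv0, hv⟩
    exact Module.End.hasEigenvalue_of_hasEigenvector
      ⟨Module.End.mem_eigenspace_iff.mpr (by rwa [toLin'_apply]), hv0⟩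

lemma exists_common_mulVec_eq_smul_of_commute [IsAlgClosed K] {A B : Matrix n n K}
    (hAB : Commute A B) {μ : K} (hμ : μ ∈ spectrum K A) :
    ∃ ν : K, ∃ v ≠ 0, A *ᵥ v = μ • v ∧ B *ᵥ v = ν • v := by
  rw [← spectrum_toLin', ← Module.End.hasEigenvalue_iff_mem_spectrum] at hμ
  obtain ⟨ν, v, hA, hB⟩ :=
    exists_common_eigenvector_of_commute (hAB.map toLinAlgEquiv') hμ
  exact ⟨ν, v, hA.2, hA.apply_eq_smul, hB.apply_eq_smul⟩

end Eigenvectors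

section Decay

variable {R : Type*} [NormedRing R] [NormedAlgebra ℂ R] [CompleteSpace R]

lemma tendsto_pow_atTop_nhds_zero_of_spectrum_norm_lt_one {a : R}
    (ha : ∀ z ∈ spectrum ℂ a, ‖z‖ < 1) : Tendsto (fun k : ℕ => a ^ k) atTop (𝓝 0) := by
  nontriviality R
  have radius_lt : spectralRadius ℂ a < (1 : NNReal) :=
    spectrum.spectralRadius_lt_of_forall_lt a fun z hz => by exact_mod_cast ha z hz
  obtain ⟨q, haq, hq⟩ := ENNReal.lt_iff_exists_nnreal_btwn.mp radius_lt
  have root_lt : ∀ᶠ k : ℕ in atTop, (‖a ^ k‖₊ : ENNReal) ^ (1 / k : ℝ) < q :=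
    (spectrum.pow_nnnorm_pow_one_div_tendsto_nhds_spectralRadius a).eventually_lt_const haq
  have norm_le : ∀ᶠ k : ℕ in atTop, ‖a ^ k‖ ≤ (q : ℝ) ^ k := by
    filter_upwards [root_lt, eventually_gt_atTop 0] with k hk hk0
    rw [one_div, ENNReal.rpow_inv_lt_iff (by exact_mod_cast hk0), ENNReal.rpow_natCast] at hk
    exact_mod_cast hk.le
  exact squeeze_zero_norm' norm_le
    (tendsto_pow_atTop_nhds_zero_of_lt_one q.2 (by exact_mod_cast hq))

-- Split `exp (t a) = (exp a) ^ ⌊t⌋ * exp ((t - ⌊t⌋) a)`; the second factor stays bounded.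
lemma tendsto_exp_smul_atTop_nhds_zero_of_spectrum_norm_lt_one {a : R}
    (ha : ∀ z ∈ spectrum ℂ (NormedSpace.exp a), ‖z‖ < 1) :
    Tendsto (fun t : ℝ => NormedSpace.exp ((t : ℂ) • a)) atTop (𝓝 0) := by
  let +nondep : NormedAlgebra ℚ R := .restrictScalars ℚ ℂ R
  have split (t : ℝ) : NormedSpace.exp ((t : ℂ) • a) =
      NormedSpace.exp a ^ ⌊t⌋₊ * NormedSpace.exp (((t - ⌊t⌋₊ : ℝ) : ℂ) • a) := by
    rw [← NormedSpace.exp_nsmul, ← NormedSpace.exp_add_of_commute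
      (((Commute.refl a).smul_left _).smul_right _), ← Nat.cast_smul_eq_nsmul ℂ, ← add_smul]
    congr 2
    push_cast
    ring
  obtain ⟨C, hC⟩ := (isCompact_Icc (a := (0 : ℝ)) (b := 1)).exists_bound_of_continuousOn
    (f := fun s : ℝ => NormedSpace.exp ((s : ℂ) • a)) (by fun_prop)
  have bounded : IsBoundedUnder (· ≤ ·) atTop
      (norm ∘ fun t : ℝ => NormedSpace.exp (((t - ⌊t⌋₊ : ℝ) : ℂ) • a)) := by
    refine isBoundedUnder_of_eventually_le (a := C) ?_
    filter_upwards [eventually_ge_atTop 0] with t ht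
    exact hC _ ⟨sub_nonneg.mpr (Nat.floor_le ht), by linarith [Nat.lt_floor_add_one t]⟩
  exact (((tendsto_pow_atTop_nhds_zero_of_spectrum_norm_lt_one ha).comp
    tendsto_nat_floor_atTop).zero_mul_isBoundedUnder_le bounded).congr fun t => (split t).symm

end Decay

section MatrixExponential

variable {n : Type*} [Fintype n] [DecidableEq n]

lemma semiconjBy_matrix_exp {R : Type*} [NormedRing R] [NormedAlgebra ℚ R] [CompleteSpace R]
    {X A B : Matrix n n R} (h : SemiconjBy X A B) :
    SemiconjBy X (NormedSpace.exp A) (NormedSpace.exp B) :=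
  @SemiconjBy.exp_right _ Matrix.linftyOpNormedRing Matrix.linftyOpNormedAlgebra
    (inferInstanceAs (CompleteSpace (n → n → R))) _ _ _ h

lemma map_matrix_exp {m R S F : Type*} [Fintype m] [DecidableEq m] [NormedRing R]
    [NormedAlgebra ℚ R] [CompleteSpace R] [NormedRing S] [Algebra ℚ S]
    [FunLike F (Matrix n n R) (Matrix m m S)] [RingHomClass F (Matrix n n R) (Matrix m m S)]
    (f : F) (hf : Continuous f) (A : Matrix n n R) :
    f (NormedSpace.exp A) = NormedSpace.exp (f A) :=
  @NormedSpace.map_exp _ _ Matrix.linftyOpNormedRing Matrix.linftyOpNormedAlgebra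
    (inferInstanceAs (CompleteSpace (n → n → R))) Matrix.linftyOpNormedRing _ _ _ _ f hf A

lemma exp_map_ofReal (A : Matrix n n ℝ) :
    NormedSpace.exp (A.map Complex.ofReal) = (NormedSpace.exp A).map Complex.ofReal :=
  (map_matrix_exp (Complex.ofRealHom.mapMatrix (m := n))
    (continuous_id.matrix_map Complex.continuous_ofReal) A).symm

-- The columns of `X` are copies of `v`, so `A v = μ v` becomes the intertwining `X (μ • 1) = A X`.
lemma exp_mulVec_of_mulVec_eq_smul {A : Matrix n n ℂ} {μ : ℂ} {v : n → ℂ}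
    (hv : A *ᵥ v = μ • v) : NormedSpace.exp A *ᵥ v = Complex.exp μ • v := by
  let X : Matrix n n ℂ := vecMulVec v 1
  have semiconj : SemiconjBy X (diagonal fun _ => μ) A := by
    rw [SemiconjBy, mul_vecMulVec, hv, ← smul_one_eq_diagonal, Matrix.mul_smul, mul_one,
      smul_vecMulVec]
  have hX := (semiconjBy_matrix_exp semiconj).eq
  rw [exp_diagonal, mul_vecMulVec] at hX
  ext i
  have := congrFun (congrFun hX i) i
  simpa [X, vecMulVec_apply, Complex.exp_eq_exp_ℂ, mul_comm, Pi.coe_exp] using this.symm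

lemma spectrum_exp_subset (A : Matrix n n ℂ) :
    spectrum ℂ (NormedSpace.exp A) ⊆ Complex.exp '' spectrum ℂ A := by
  intro z hz
  have commute : Commute (NormedSpace.exp A) A :=
    (semiconjBy_matrix_exp (Commute.refl A)).symm
  obtain ⟨μ, v, hv0, hzv, hμ⟩ := exists_common_mulVec_eq_smul_of_commute commute hz
  refine ⟨μ, mem_spectrum_iff_exists_mulVec_eq_smul.mpr ⟨v, hv0, hμ⟩, ?_⟩
  exact smul_left_injective ℂ hv0 ((exp_mulVec_of_mulVec_eq_smul hμ).symm.trans hzv)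

/-- A complex matrix is Hurwitz if all its eigenvalues lie in the open left half-plane. -/
def IsHurwitz (A : Matrix n n ℂ) : Prop :=
  ∀ μ ∈ spectrum ℂ A, μ.re < 0

lemma IsHurwitz.tendsto_exp_smul {A : Matrix n n ℂ} (hA : IsHurwitz A) :
    Tendsto (fun t : ℝ => NormedSpace.exp ((t : ℂ) • A)) atTop (𝓝 0) := by
  have norm_lt : ∀ z ∈ spectrum ℂ (NormedSpace.exp A), ‖z‖ < 1 := by
    intro z hz
    obtain ⟨μ, hμ, rfl⟩ := spectrum_exp_subset A hz
    rw [Complex.norm_exp, Real.exp_lt_one_iff]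
    exact hA μ hμ
  exact @tendsto_exp_smul_atTop_nhds_zero_of_spectrum_norm_lt_one _ Matrix.linftyOpNormedRing
    Matrix.linftyOpNormedAlgebra (inferInstanceAs (CompleteSpace (n → n → ℂ))) A norm_lt

lemma tendsto_exp_smul_of_isHurwitz_map_ofReal {A : Matrix n n ℝ}
    (hA : IsHurwitz (A.map Complex.ofReal)) :
    Tendsto (fun t : ℝ => NormedSpace.exp (t • A)) atTop (𝓝 0) := by
  have re_exp (t : ℝ) : NormedSpace.exp (t • A) =
      (NormedSpace.exp ((t : ℂ) • A.map Complex.ofReal)).map Complex.re := by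
    have : (t : ℂ) • A.map Complex.ofReal = (t • A).map Complex.ofReal := by
      ext; simp
    rw [this, exp_map_ofReal]
    ext; simp
  simp_rw [re_exp]
  have continuous_re : Continuous fun M : Matrix n n ℂ => M.map Complex.re :=
    continuous_id.matrix_map Complex.continuous_re
  simpa [Function.comp_def] using (continuous_re.tendsto 0).comp hA.tendsto_exp_smul

end MatrixExponential

section Kronecker

variable {ι κ : Type*} [Fintype ι] [Fintype κ]

lemma kronecker_mulVec_apply {R : Type*} [CommSemiring R] (G : Matrix ι ι R) (B : Matrix κ κ R)
    (v : ι × κ → R) (i : ι) (k : κ) :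
    ((G ⊗ₖ B) *ᵥ v) (i, k) = (B *ᵥ fun l => (G *ᵥ fun j => v (j, l)) i) k := by
  simp only [mulVec, dotProduct, Fintype.sum_prod_type_right, kroneckerMap_apply,
    Finset.mul_sum, mul_assoc, mul_left_comm]

variable [DecidableEq ι] [DecidableEq κ]

lemma exists_mem_spectrum_of_mem_spectrum_one_kronecker_add {K : Type*} [Field K] [IsAlgClosed K]
    {G : Matrix ι ι K} {A E : Matrix κ κ K} {μ : K}
    (hμ : μ ∈ spectrum K ((1 : Matrix ι ι K) ⊗ₖ A + G ⊗ₖ E)) :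
    ∃ ν ∈ spectrum K G, μ ∈ spectrum K (A + ν • E) := by
  have commute : Commute ((1 : Matrix ι ι K) ⊗ₖ A + G ⊗ₖ E) (G ⊗ₖ 1) := by
    simp only [Commute, SemiconjBy, add_mul, mul_add, ← mul_kronecker_mul, one_mul, mul_one]
  obtain ⟨ν, v, hv0, hμv, hν⟩ := exists_common_mulVec_eq_smul_of_commute commute hμ
  have decoupled : ((1 : Matrix ι ι K) ⊗ₖ (A + ν • E)) *ᵥ v = μ • v := by
    have : G ⊗ₖ E = ((1 : Matrix ι ι K) ⊗ₖ E) * (G ⊗ₖ 1) := by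
      rw [← mul_kronecker_mul, one_mul, mul_one]
    rw [← hμv, this, add_mulVec, ← mulVec_mulVec, hν, kronecker_add, kronecker_smul, add_mulVec,
      smul_mulVec, mulVec_smul]
  obtain ⟨⟨i, k⟩, hik⟩ := Function.ne_iff.mp hv0
  refine ⟨ν, mem_spectrum_iff_exists_mulVec_eq_smul.mpr ⟨fun j => v (j, k), ?_, ?_⟩,
    mem_spectrum_iff_exists_mulVec_eq_smul.mpr ⟨fun l => v (i, l), ?_, ?_⟩⟩
  · exact fun h => hik (congrFun h i)
  · ext j
    simpa [kronecker_mulVec_apply] using congrFun hν (j, k)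
  · exact fun h => hik (congrFun h k)
  · ext l
    simpa [kronecker_mulVec_apply] using congrFun decoupled (i, l)

section Exponential

variable {R : Type*} [NormedCommRing R] [NormedAlgebra ℚ R] [CompleteSpace R]

lemma exp_one_kronecker (A : Matrix κ κ R) :
    NormedSpace.exp ((1 : Matrix ι ι R) ⊗ₖ A) = 1 ⊗ₖ NormedSpace.exp A := by
  let oneKronecker : Matrix κ κ R →+* Matrix (ι × κ) (ι × κ) R :=
    { toFun := fun B => 1 ⊗ₖ B
      map_one' := one_kronecker_one
      map_mul' := fun B C => by rw [← mul_kronecker_mul, one_mul]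
      map_zero' := kronecker_zero 1
      map_add' := kronecker_add 1 }
  have continuous_oneKronecker : Continuous oneKronecker :=
    continuous_matrix fun _ _ => continuous_const.mul (continuous_id.matrix_elem _ _)
  exact (map_matrix_exp oneKronecker continuous_oneKronecker A).symm

lemma exp_one_kronecker_add_sub_kronecker_exp {Γ J : Matrix ι ι R} (hJ : IsIdempotentElem J)
    (hΓJ : Γ * J = 0) (hJΓ : J * Γ = 0) (A E : Matrix κ κ R) :
    NormedSpace.exp ((1 : Matrix ι ι R) ⊗ₖ A + Γ ⊗ₖ E) - J ⊗ₖ NormedSpace.exp A =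
      ((1 - J) ⊗ₖ (1 : Matrix κ κ R)) *
        NormedSpace.exp ((1 : Matrix ι ι R) ⊗ₖ A + (Γ - J) ⊗ₖ E) := by
  have on_range : SemiconjBy (J ⊗ₖ (1 : Matrix κ κ R)) ((1 : Matrix ι ι R) ⊗ₖ A)
      ((1 : Matrix ι ι R) ⊗ₖ A + Γ ⊗ₖ E) := by
    simp only [SemiconjBy, add_mul, ← mul_kronecker_mul, hΓJ, one_mul, mul_one, zero_kronecker,
      add_zero]
  have on_ker : SemiconjBy ((1 - J) ⊗ₖ (1 : Matrix κ κ R))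
      ((1 : Matrix ι ι R) ⊗ₖ A + (Γ - J) ⊗ₖ E) ((1 : Matrix ι ι R) ⊗ₖ A + Γ ⊗ₖ E) := by
    have : (1 - J) * (Γ - J) = Γ * (1 - J) := by
      rw [sub_mul, mul_sub, mul_sub, mul_sub, hJΓ, hΓJ, hJ.eq, one_mul, one_mul, mul_one]
      abel
    simp only [SemiconjBy, mul_add, add_mul, ← mul_kronecker_mul, this, one_mul, mul_one]
  have h_range := (semiconjBy_matrix_exp on_range).eq
  rw [exp_one_kronecker, ← mul_kronecker_mul, one_mul, mul_one] at h_range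
  rw [(semiconjBy_matrix_exp on_ker).eq, h_range, sub_eq_iff_eq_add, ← mul_add, ← add_kronecker,
    sub_add_cancel, one_kronecker_one, mul_one]

end Exponential

theorem tendsto_exp_one_kronecker_add_sub_kronecker_exp {Γ J : Matrix ι ι ℝ}
    {A E : Matrix κ κ ℝ} (hJ : IsIdempotentElem J) (hΓJ : Γ * J = 0) (hJΓ : J * Γ = 0)
    (hurwitz : ∀ ν ∈ spectrum ℂ ((Γ - J).map Complex.ofReal),
      IsHurwitz (A.map Complex.ofReal + ν • E.map Complex.ofReal)) :
    Tendsto (fun t : ℝ => NormedSpace.exp (t • ((1 : Matrix ι ι ℝ) ⊗ₖ A + Γ ⊗ₖ E))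
      - J ⊗ₖ NormedSpace.exp (t • A)) atTop (𝓝 0) := by
  have isHurwitz : IsHurwitz
      (((1 : Matrix ι ι ℝ) ⊗ₖ A + (Γ - J) ⊗ₖ E).map Complex.ofReal) := by
    have map_eq : ((1 : Matrix ι ι ℝ) ⊗ₖ A + (Γ - J) ⊗ₖ E).map Complex.ofReal =
        (1 : Matrix ι ι ℂ) ⊗ₖ A.map Complex.ofReal +
          (Γ - J).map Complex.ofReal ⊗ₖ E.map Complex.ofReal := by
      ext ⟨i, k⟩ ⟨j, l⟩
      simp [one_apply, apply_ite Complex.ofReal]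
    rw [map_eq]
    intro μ hμ
    obtain ⟨ν, hν, hμν⟩ := exists_mem_spectrum_of_mem_spectrum_one_kronecker_add hμ
    exact hurwitz ν hν μ hμν
  have deflate (t : ℝ) := exp_one_kronecker_add_sub_kronecker_exp hJ hΓJ hJΓ (t • A) (t • E)
  simp only [kronecker_smul, ← smul_add] at deflate
  simp only [deflate]
  simpa using (tendsto_exp_smul_of_isHurwitz_map_ofReal isHurwitz).const_mul
    ((1 - J) ⊗ₖ (1 : Matrix κ κ ℝ))

end Kronecker

lemma eq_neg_one_or_of_sub_vecMulVec_mulVec_eq_smul {ι K : Type*} [Fintype ι] [Field K]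
    {G : Matrix ι ι K} {u r v : ι → K} {ν : K} (hr : r ᵥ* G = 0) (hru : r ⬝ᵥ u = 1)
    (hv : (G - vecMulVec u r) *ᵥ v = ν • v) : ν = -1 ∨ r ⬝ᵥ v = 0 ∧ G *ᵥ v = ν • v := by
  have pairing : -(r ⬝ᵥ v) = ν * (r ⬝ᵥ v) := by
    rw [← smul_eq_mul, ← dotProduct_smul, ← hv, dotProduct_mulVec, vecMul_sub, hr,
      vecMul_vecMulVec, hru, one_smul, zero_sub, neg_dotProduct]
  by_cases hrv : r ⬝ᵥ v = 0
  · refine .inr ⟨hrv, ?_⟩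
    simpa [sub_mulVec, vecMulVec_mulVec, hrv] using hv
  · exact .inl (mul_right_cancel₀ hrv (by rw [← pairing, neg_one_mul]))

lemma re_neg_or_eq_zero_of_mem_closedBall_neg {d : ℝ} {z : ℂ}
    (hz : z ∈ Metric.closedBall (-d : ℂ) d) : z.re < 0 ∨ z = 0 := by
  rw [mem_closedBall_iff_norm, sub_neg_eq_add] at hz
  have hd : 0 ≤ d := (norm_nonneg _).trans hz
  have hsq : (z.re + d) ^ 2 + z.im ^ 2 ≤ d ^ 2 := by
    have := pow_le_pow_left₀ (norm_nonneg _) hz 2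
    simpa [Complex.sq_norm, Complex.normSq_apply, ← sq] using this
  refine or_iff_not_imp_left.mpr fun hre => ?_
  have : 0 ≤ z.re * d := mul_nonneg (not_lt.mp hre) hd
  apply Complex.ext <;> simp only [Complex.zero_re, Complex.zero_im] <;> nlinarith

section Interconnection

variable {p : ℕ} {Γ : Matrix (Fin p) (Fin p) ℝ}

lemma IsInterconnection.re_neg_or_eq_zero_of_mem_spectrum (hΓ : IsInterconnection Γ) {ν : ℂ}
    (hν : ν ∈ spectrum ℂ (Γ.map Complex.ofReal)) : ν.re < 0 ∨ ν = 0 := by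
  rw [← spectrum_toLin', ← Module.End.hasEigenvalue_iff_mem_spectrum] at hν
  obtain ⟨k, hk⟩ := eigenvalue_mem_ball hν
  have radius : ∑ j ∈ Finset.univ.erase k, ‖Γ.map Complex.ofReal k j‖ = -Γ k k := by
    rw [← sub_eq_zero, sub_neg_eq_add, ← hΓ.2 k, ← Finset.sum_erase_add _ _ (Finset.mem_univ k)]
    congr 1
    refine Finset.sum_congr rfl fun j hj => ?_
    rw [map_apply, Complex.norm_of_nonneg (hΓ.1 k j (Finset.ne_of_mem_erase hj).symm)]
  rw [radius] at hk
  exact re_neg_or_eq_zero_of_mem_closedBall_neg (d := -Γ k k) (by simpa using hk)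

lemma IsInterconnection.eq_of_mulVec_eq_zero_of_le (hΓ : IsInterconnection Γ) {y : Fin p → ℝ}
    (hy : Γ *ᵥ y = 0) {a b : Fin p} (ha : ∀ j, y j ≤ y a) (hab : 0 < Γ a b) : y b = y a := by
  have sum_eq_zero : ∑ j, Γ a j * (y a - y j) = 0 := by
    have : ∑ j, Γ a j * y j = 0 := congrFun hy a
    simp only [mul_sub, Finset.sum_sub_distrib, ← Finset.sum_mul, hΓ.2 a, this, zero_mul, sub_zero]
  have term_nonneg : ∀ j ∈ Finset.univ, 0 ≤ Γ a j * (y a - y j) := by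
    intro j _
    rcases eq_or_ne a j with rfl | haj
    · simp
    · exact mul_nonneg (hΓ.1 a j haj) (sub_nonneg.mpr (ha j))
  have term_eq_zero :=
    (Finset.sum_eq_zero_iff_of_nonneg term_nonneg).mp sum_eq_zero b (Finset.mem_univ b)
  linarith [(mul_eq_zero.mp term_eq_zero).resolve_left hab.ne']

lemma IsInterconnection.le_of_mulVec_eq_zero (hΓ : IsInterconnection Γ) {k : Fin p}
    (hk : ∀ i, Relation.ReflTransGen (fun a b => 0 < Γ a b) i k) {y : Fin p → ℝ}
    (hy : Γ *ᵥ y = 0) (i : Fin p) : y i ≤ y k := by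
  have : Nonempty (Fin p) := ⟨k⟩
  obtain ⟨m, hm⟩ := Finite.exists_max y
  suffices ∀ b, Relation.ReflTransGen (fun a b => 0 < Γ a b) m b → y b = y m from
    (hm i).trans_eq (this k (hk m)).symm
  intro b hmb
  induction hmb with
  | refl => rfl
  | tail _ hab ih => exact (hΓ.eq_of_mulVec_eq_zero_of_le hy (by simpa [ih] using hm) hab).trans ih

lemma IsConnectedInterconnection.exists_eq_const_of_mulVec_eq_zero
    (hΓ : IsConnectedInterconnection Γ) {y : Fin p → ℂ} (hy : Γ.map Complex.ofReal *ᵥ y = 0) :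
    ∃ c, y = fun _ => c := by
  obtain ⟨hΓ, k, hk⟩ := hΓ
  have real_eq {x : Fin p → ℝ} (hx : Γ *ᵥ x = 0) (i : Fin p) : x i = x k :=
    (hΓ.le_of_mulVec_eq_zero hk hx i).antisymm <| neg_le_neg_iff.mp <|
      hΓ.le_of_mulVec_eq_zero hk (y := -x) (by rw [mulVec_neg, hx, neg_zero]) i
  refine ⟨y k, funext fun i => Complex.ext ?_ ?_⟩
  · refine real_eq (x := fun j => (y j).re) (funext fun j => ?_) i
    simpa [mulVec, dotProduct] using congrArg Complex.re (congrFun hy j)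
  · refine real_eq (x := fun j => (y j).im) (funext fun j => ?_) i
    simpa [mulVec, dotProduct] using congrArg Complex.im (congrFun hy j)

theorem IsConnectedInterconnection.isHurwitz_sub_vecMulVec (hΓ : IsConnectedInterconnection Γ)
    {r : Fin p → ℝ} (hr : r ᵥ* Γ = 0) (hr1 : ∑ i, r i = 1) :
    IsHurwitz ((Γ - vecMulVec (fun _ => 1) r).map Complex.ofReal) := by
  intro ν hν
  obtain ⟨v, hv0, hv⟩ := mem_spectrum_iff_exists_mulVec_eq_smul.mp hν
  let rC : Fin p → ℂ := fun i => r i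
  have hrC : rC ᵥ* Γ.map Complex.ofReal = 0 := by
    ext j
    have := congrArg Complex.ofReal (congrFun hr j)
    simpa [rC, vecMul, dotProduct] using this
  have hrC1 : rC ⬝ᵥ (fun _ => 1) = 1 := by
    simpa [rC, dotProduct] using congrArg Complex.ofReal hr1
  have map_eq : (Γ - vecMulVec (fun _ => 1) r).map Complex.ofReal =
      Γ.map Complex.ofReal - vecMulVec (fun _ => 1) rC := by
    ext
    simp [rC, vecMulVec_apply]
  rw [map_eq] at hv
  obtain rfl | ⟨hrv, hΓv⟩ := eq_neg_one_or_of_sub_vecMulVec_mulVec_eq_smul hrC hrC1 hv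
  · norm_num
  refine (hΓ.1.re_neg_or_eq_zero_of_mem_spectrum
    (mem_spectrum_iff_exists_mulVec_eq_smul.mpr ⟨v, hv0, hΓv⟩)).resolve_right ?_
  rintro rfl
  obtain ⟨c, rfl⟩ := hΓ.exists_eq_const_of_mulVec_eq_zero (hΓv.trans (zero_smul ℂ v))
  have hc : c = 0 := by
    have : (fun _ => c) = c • fun _ : Fin p => (1 : ℂ) := by ext; simp
    rwa [this, dotProduct_smul, hrC1, smul_eq_mul, mul_one] at hrv
  exact hv0 (funext fun _ => hc)

theorem IsConnectedInterconnection.tendsto_exp_one_kronecker_add_sub_vecMulVec_kronecker_exp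
    {κ : Type*} [Fintype κ] [DecidableEq κ] (hΓ : IsConnectedInterconnection Γ)
    {r : Fin p → ℝ} (hr : r ᵥ* Γ = 0) (hr1 : ∑ i, r i = 1) {A E : Matrix κ κ ℝ}
    (hAE : ∀ ν : ℂ, ν.re < 0 → IsHurwitz (A.map Complex.ofReal + ν • E.map Complex.ofReal)) :
    Tendsto (fun t : ℝ => NormedSpace.exp (t • ((1 : Matrix (Fin p) (Fin p) ℝ) ⊗ₖ A + Γ ⊗ₖ E))
      - vecMulVec (fun _ => 1) r ⊗ₖ NormedSpace.exp (t • A)) atTop (𝓝 0) := by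
  refine tendsto_exp_one_kronecker_add_sub_kronecker_exp ?_ ?_ ?_ fun ν hν =>
    hAE ν (hΓ.isHurwitz_sub_vecMulVec hr hr1 ν hν)
  · simp [IsIdempotentElem, vecMulVec_mul_vecMulVec, dotProduct, hr1]
  · ext
    simp [mul_vecMulVec, mulVec, dotProduct, hΓ.1.2, vecMulVec_apply]
  · simp [vecMulVec_mul, hr]

end Interconnection

lemma isHurwitz_harmonicOscillator_add_smul {ν : ℂ} (hν : ν.re < 0) :
    IsHurwitz (!![(0 : ℝ), 1; -1, 0].map Complex.ofReal +
      ν • !![(0 : ℝ), 0; 0, 1].map Complex.ofReal) := by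
  intro μ hμ
  obtain ⟨v, hv0, hv⟩ := mem_spectrum_iff_exists_mulVec_eq_smul.mp hμ
  have h0 : v 1 = μ * v 0 := by simpa [mulVec, dotProduct, Fin.sum_univ_two] using congrFun hv 0
  have h1 : -v 0 + ν * v 1 = μ * v 1 := by
    simpa [mulVec, dotProduct, Fin.sum_univ_two] using congrFun hv 1
  have v0_ne_zero : v 0 ≠ 0 := by
    intro h
    apply hv0
    ext i
    fin_cases i <;> simp [h, h0]
  have characteristic : μ * μ + 1 = ν * μ :=
    mul_right_cancel₀ v0_ne_zero (by rw [h0] at h1; linear_combination -h1)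
  have hμ0 : μ ≠ 0 := by
    rintro rfl
    simp at characteristic
  have hνμ : ν = μ + μ⁻¹ := by
    field_simp
    linear_combination -characteristic
  by_contra! hμre
  have : 0 ≤ (μ + μ⁻¹).re := by
    rw [Complex.add_re, Complex.inv_re]
    exact add_nonneg hμre (div_nonneg hμre (Complex.normSq_nonneg μ))
  exact hν.not_ge (hνμ ▸ this)

/-- Coupled harmonic oscillators with connected interconnection synchronize:
the stacked state `z(t) = exp(t(I_p ⊗ A₀ + Γ ⊗ E)) z(0)` converges to
`(1rᵀ ⊗ exp(tA₀)) z(0)`, and in particular the oscillators synchronize. -/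
theorem coupled_harmonic_oscillators_synchronize
    (p : ℕ) (Γ : Matrix (Fin p) (Fin p) ℝ) (hΓ : IsConnectedInterconnection Γ)
    (r : Fin p → ℝ) (hr : r ᵥ* Γ = 0) (hr1 : ∑ i, r i = 1)
    (z0 : Fin p × Fin 2 → ℝ) :
    Tendsto (fun t : ℝ =>
        NormedSpace.exp (t • ((1 : Matrix (Fin p) (Fin p) ℝ) ⊗ₖ !![(0 : ℝ), 1; -1, 0]
            + Γ ⊗ₖ !![(0 : ℝ), 0; 0, 1])) *ᵥ z0
          - (vecMulVec (fun _ => (1 : ℝ)) r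
              ⊗ₖ NormedSpace.exp (t • !![(0 : ℝ), 1; -1, 0])) *ᵥ z0)
      atTop (nhds 0) ∧
    ∃ zbar : ℝ → Fin 2 → ℝ, ∀ i : Fin p,
      Tendsto (fun t : ℝ => (fun k : Fin 2 =>
          (NormedSpace.exp (t • ((1 : Matrix (Fin p) (Fin p) ℝ) ⊗ₖ !![(0 : ℝ), 1; -1, 0]
              + Γ ⊗ₖ !![(0 : ℝ), 0; 0, 1])) *ᵥ z0) (i, k) - zbar t k))
        atTop (nhds 0) := by
  have matrix_limit := hΓ.tendsto_exp_one_kronecker_add_sub_vecMulVec_kronecker_exp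
    hr hr1 fun ν hν => isHurwitz_harmonicOscillator_add_smul hν
  have state_limit :=
    ((continuous_id.matrix_mulVec (continuous_const (y := z0))).tendsto 0).comp matrix_limit
  simp only [Function.comp_def, id, sub_mulVec, zero_mulVec] at state_limit
  refine ⟨state_limit, fun t => NormedSpace.exp (t • !![0, 1; -1, 0]) *ᵥ fun l =>
    r ⬝ᵥ fun j => z0 (j, l), fun i => tendsto_pi_nhds.mpr fun k => ?_⟩
  simpa [kronecker_mulVec_apply, vecMulVec_mulVec] using tendsto_pi_nhds.mp state_limit (i, k)
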